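/- Let m ≥ 1 and let θ : Fin m → ℝ be injective with 0 < θ(l) < π for all l. On V = (Fin m → ℍ), a real inner product space of dimension 4m, define J₀(v) = (l ↦ i·v(l)) and J₁(v) = (l ↦ (cos θ(l) · i + sin θ(l) · k)·v(l)). Then for every integer k with 0 ≤ k ≤ 2m, the set of real subspaces P of V with dim P = 2k that are invariant under both J₀ and J₁ is finite, of cardinality σ(k, 2m); that is, the cardinality is 0 if k is odd and binomial(m, k/2) if k is even. -/

import Mathlib

/-!
The set of `f ∈ ℍ^m` whose coordinatewise left multiplication maps an invariant plane `P` into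
itself is a real subalgebra of the product algebra `ℍ^m`. If it contains `J₀` and `J₁`, it contains
`J₀ J₁ + J₁ J₀ = -2 cos θ`, a real scalar on each coordinate; these scalars are distinct because
`cos` is injective on `[0, π]`, so Lagrange interpolation yields the coordinate idempotents.
On a single coordinate, `i` and `cos θ i + sin θ k` generate `ℍ` because `sin θ ≠ 0`. Hence the
subalgebra is all of `ℍ^m` (`eq_top_of_mem`), that is, `P` is a left ideal of a product of
division rings. Such an ideal is a coordinate subspace `ℍ^S` with `S ⊆ Fin m`
(`exists_eq_coordSubspace`), of real dimension `4 |S|`. The invariant planes of dimension `2k`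
therefore correspond to the subsets `S` with `2 |S| = k`.
-/

open scoped Quaternion

/-- The quaternion `i`. -/
def qI : ℍ[ℝ] := ⟨0, 1, 0, 0⟩
/-- The quaternion `k`. -/
def qK : ℍ[ℝ] := ⟨0, 0, 0, 1⟩

/-- For integers `k, n`: `σ(k,n) = 0` if `k < 0` or `k > n`; otherwise `σ(k,n) = 0`
if `k` is odd and `n` is even, and `σ(k,n) = binomial(⌊n/2⌋, ⌊k/2⌋)` otherwise. -/
def sigmaInt (k n : ℤ) : ℤ :=
  if k < 0 ∨ n < k then 0
  else if Odd k ∧ Even n then 0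
  else ((n / 2).toNat.choose (k / 2).toNat : ℤ)

/-- The set of real subspaces of `ℍ^m` of dimension `2k` invariant under the complex
structures `J₀ = ` coordinatewise left multiplication by `i` and `J₁ = ` coordinatewise
left multiplication by `cos θ(l) · i + sin θ(l) · k`. -/
def invariantPlanes (m : ℕ) (θ : Fin m → ℝ) (k : ℕ) :
    Set (Submodule ℝ (Fin m → ℍ[ℝ])) :=
  {P | Module.finrank ℝ P = 2 * k ∧
    (∀ v ∈ P, (fun l => qI * v l) ∈ P) ∧
    (∀ v ∈ P, (fun l => (Real.cos (θ l) • qI + Real.sin (θ l) • qK) * v l) ∈ P)}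

@[simp] theorem qI_re : qI.re = 0 := rfl
@[simp] theorem qI_imI : qI.imI = 1 := rfl
@[simp] theorem qI_imJ : qI.imJ = 0 := rfl
@[simp] theorem qI_imK : qI.imK = 0 := rfl
@[simp] theorem qK_re : qK.re = 0 := rfl
@[simp] theorem qK_imI : qK.imI = 0 := rfl
@[simp] theorem qK_imJ : qK.imJ = 0 := rfl
@[simp] theorem qK_imK : qK.imK = 1 := rfl

/-- The subalgebra of `ℍ^m` of those elements whose coordinatewise left multiplication
preserves `P`. -/
def stabilizerAlg {m : ℕ} (P : Submodule ℝ (Fin m → ℍ[ℝ])) :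
    Subalgebra ℝ (Fin m → ℍ[ℝ]) where
  carrier := {f | ∀ v ∈ P, f * v ∈ P}
  mul_mem' {f g} hf hg v hv := by
    rw [mul_assoc]
    exact hf _ (hg v hv)
  add_mem' {f g} hf hg v hv := by
    rw [add_mul]
    exact P.add_mem (hf v hv) (hg v hv)
  algebraMap_mem' r v hv := by
    rw [← Algebra.smul_def]
    exact P.smul_mem r hv

/-- The coordinate subspace `ℍ^S` of `ℍ^m`: the vectors that vanish outside `S`. -/
def coordSubspace {m : ℕ} (S : Finset (Fin m)) : Submodule ℝ (Fin m → ℍ[ℝ]) where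
  carrier := {v | ∀ l, l ∉ S → v l = 0}
  add_mem' hv hw l hl := by simp [hv l hl, hw l hl]
  zero_mem' l _ := rfl
  smul_mem' c v hv l hl := by simp [hv l hl]

theorem mem_coordSubspace {m : ℕ} {S : Finset (Fin m)} {v : Fin m → ℍ[ℝ]} :
    v ∈ coordSubspace S ↔ ∀ l, l ∉ S → v l = 0 := Iff.rfl

theorem finrank_coordSubspace {m : ℕ} (S : Finset (Fin m)) :
    Module.finrank ℝ (coordSubspace S) = 4 * S.card := by
  have h : coordSubspace S = ⨅ i ∈ ((S : Set (Fin m))ᶜ),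
      LinearMap.ker (LinearMap.proj i : (Fin m → ℍ[ℝ]) →ₗ[ℝ] ℍ[ℝ]) := by
    ext v
    simp [mem_coordSubspace, Submodule.mem_iInf]
  classical
  rw [h, (LinearMap.iInfKerProjEquiv ℝ (fun _ : Fin m => ℍ[ℝ])
    (I := (S : Set (Fin m))) (J := (S : Set (Fin m))ᶜ) disjoint_compl_right
    (by simp)).finrank_eq, Module.finrank_pi_fintype]
  simp [Quaternion.finrank_eq_four, mul_comm]

theorem coordSubspace_injective {m : ℕ} :
    Function.Injective (coordSubspace : Finset (Fin m) → _) := by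
  have key : ∀ S T : Finset (Fin m), coordSubspace S = coordSubspace T → S ⊆ T := by
    intro S T h l hl
    by_contra hT
    have hmem : (Pi.single l 1 : Fin m → ℍ[ℝ]) ∈ coordSubspace S := fun j hj =>
      Pi.single_eq_of_ne (by rintro rfl; exact hj hl) _
    rw [h] at hmem
    simpa using hmem l hT
  exact fun S T h => (key S T h).antisymm (key T S h.symm)

/-- A subalgebra of `ℍ^m` containing an element whose coordinates are distinct real scalars
contains the coordinate idempotents, by Lagrange interpolation. -/
theorem single_one_mem {m : ℕ} (A : Subalgebra ℝ (Fin m → ℍ[ℝ])) (c : Fin m → ℝ)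
    (hc : Function.Injective c) (hA : (fun l => (c l : ℍ[ℝ])) ∈ A) (l : Fin m) :
    (Pi.single l 1 : Fin m → ℍ[ℝ]) ∈ A := by
  classical
  have h := (Polynomial.aeval (⟨_, hA⟩ : A) (Lagrange.basis Finset.univ c l)).2
  have e : ((Polynomial.aeval (⟨_, hA⟩ : A) (Lagrange.basis Finset.univ c l) : A) :
      Fin m → ℍ[ℝ]) = Pi.single l 1 := by
    funext j
    -- Evaluation at the coordinate `j` is an algebra map, so it passes through the polynomial.
    change ((Pi.evalAlgHom ℝ (fun _ : Fin m => ℍ[ℝ]) j).comp A.val)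
      (Polynomial.aeval (⟨_, hA⟩ : A) (Lagrange.basis Finset.univ c l)) = _
    rw [← Polynomial.aeval_algHom_apply]
    change Polynomial.aeval (algebraMap ℝ ℍ[ℝ] (c j)) _ = _
    rw [Polynomial.aeval_algebraMap_apply, Polynomial.aeval_def, Polynomial.eval₂_eq_eval_map]
    simp only [Algebra.algebraMap_self, Polynomial.map_id]
    by_cases hj : j = l
    · subst hj
      rw [Lagrange.eval_basis_self hc.injOn (Finset.mem_univ _)]
      simp
    · rw [Lagrange.eval_basis_of_ne (Ne.symm hj) (Finset.mem_univ _)]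
      simp [hj]
  rwa [e] at h

/-- `J₀` and `J₁` generate the algebra `ℍ^m`. -/
theorem eq_top_of_mem {m : ℕ} {θ : Fin m → ℝ} (hinj : Function.Injective θ)
    (hθ : ∀ l, θ l ∈ Set.Ioo (0 : ℝ) Real.pi) (A : Subalgebra ℝ (Fin m → ℍ[ℝ]))
    (h0 : (fun _ => qI) ∈ A)
    (h1 : (fun l => Real.cos (θ l) • qI + Real.sin (θ l) • qK) ∈ A) : A = ⊤ := by
  have hcos : Function.Injective fun l => -2 * Real.cos (θ l) := by
    intro a b hab
    refine hinj (Real.injOn_cos ?_ ?_ (by simpa using hab))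
    · exact Set.Ioo_subset_Icc_self (hθ a)
    · exact Set.Ioo_subset_Icc_self (hθ b)
  have hsc : (fun l => ((-2 * Real.cos (θ l) : ℝ) : ℍ[ℝ])) ∈ A := by
    convert A.add_mem (A.mul_mem h0 h1) (A.mul_mem h1 h0) using 1
    funext l
    ext <;> simp [Pi.mul_apply]
    ring
  have he := single_one_mem A _ hcos hsc
  have hI : ∀ l, (Pi.single l qI : Fin m → ℍ[ℝ]) ∈ A := by
    intro l
    convert A.mul_mem (he l) h0 using 1
    rw [← Pi.single_mul_left]
    simp
  have hK : ∀ l, (Pi.single l qK : Fin m → ℍ[ℝ]) ∈ A := by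
    intro l
    have hs : Real.sin (θ l) ≠ 0 := (Real.sin_pos_of_mem_Ioo (hθ l)).ne'
    convert A.smul_mem (A.sub_mem (A.mul_mem (he l) h1)
      (A.smul_mem (hI l) (Real.cos (θ l)))) (Real.sin (θ l))⁻¹ using 1
    rw [← Pi.single_mul_left, ← Pi.single_smul, ← Pi.single_sub, ← Pi.single_smul]
    congr 1
    simp [smul_smul, hs]
  have hq : ∀ l (q : ℍ[ℝ]), (Pi.single l q : Fin m → ℍ[ℝ]) ∈ A := by
    intro l q
    -- The remaining basis quaternion is `j = k * i`.
    have e : q = q.re • (1 : ℍ[ℝ]) + q.imI • qI + q.imJ • (qK * qI) + q.imK • qK := by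
      ext <;> simp
    rw [e, Pi.single_add, Pi.single_add, Pi.single_add, Pi.single_smul, Pi.single_smul,
      Pi.single_smul, Pi.single_smul, Pi.single_mul]
    exact A.add_mem (A.add_mem (A.add_mem (A.smul_mem (he l) _) (A.smul_mem (hI l) _))
      (A.smul_mem (A.mul_mem (hK l) (hI l)) _)) (A.smul_mem (hK l) _)
  rw [eq_top_iff]
  intro f _
  rw [← Finset.univ_sum_single f]
  exact A.sum_mem fun l _ => hq l _

/-- A left ideal of `ℍ^m` is a coordinate subspace, since each factor is a division ring. -/
theorem exists_eq_coordSubspace {m : ℕ} (P : Submodule ℝ (Fin m → ℍ[ℝ]))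
    (hP : stabilizerAlg P = ⊤) : ∃ S, coordSubspace S = P := by
  classical
  have hmul : ∀ f, ∀ v ∈ P, f * v ∈ P := fun f =>
    show f ∈ stabilizerAlg P from hP ▸ Algebra.mem_top
  refine ⟨Finset.univ.filter fun l => ∃ v ∈ P, v l ≠ 0, le_antisymm ?_ ?_⟩
  · intro v hv
    rw [← Finset.univ_sum_single v]
    refine P.sum_mem fun l _ => ?_
    by_cases hl : ∃ w ∈ P, w l ≠ 0
    · obtain ⟨w, hw, hwl⟩ := hl
      convert hmul (Pi.single l (v l * (w l)⁻¹)) w hw using 1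
      rw [← Pi.single_mul_left, mul_assoc, inv_mul_cancel₀ hwl, mul_one]
    · rw [hv l (by simpa using hl), Pi.single_zero]
      exact P.zero_mem
  · intro v hv l hl
    by_contra h
    exact hl (by simpa using ⟨v, hv, h⟩)

theorem invariantPlanes_eq_image {m : ℕ} {θ : Fin m → ℝ} (hinj : Function.Injective θ)
    (hθ : ∀ l, θ l ∈ Set.Ioo (0 : ℝ) Real.pi) (k : ℕ) :
    invariantPlanes m θ k =
      coordSubspace '' {S : Finset (Fin m) | 2 * S.card = k} := by
  ext P
  constructor
  · rintro ⟨hd, h0, h1⟩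
    obtain ⟨S, rfl⟩ := exists_eq_coordSubspace P (eq_top_of_mem hinj hθ _ h0 h1)
    rw [finrank_coordSubspace] at hd
    exact ⟨S, by simp only [Set.mem_ofPred_eq]; omega, rfl⟩
  · rintro ⟨S, hS, rfl⟩
    simp only [Set.mem_ofPred_eq] at hS
    refine ⟨by rw [finrank_coordSubspace]; omega, ?_, ?_⟩
    · intro v hv l hl
      simp [hv l hl]
    · intro v hv l hl
      simp [hv l hl]

/-- For a generic pair of orthogonal complex structures on `ℍ^m` (of type
`ℍ_{θ₁} ⊕ ⋯ ⊕ ℍ_{θ_m}` with the `θ l ∈ (0,π)` distinct), the set of invariant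
`2k`-planes is finite of cardinality `σ(k, 2m)`, i.e. `0` if `k` is odd and
`binomial(m, k/2)` if `k` is even. -/
theorem card_invariant_planes_quaternionic (m : ℕ) (hm : 1 ≤ m) (θ : Fin m → ℝ)
    (hinj : Function.Injective θ) (hθ : ∀ l, θ l ∈ Set.Ioo (0 : ℝ) Real.pi)
    (k : ℕ) (hk : k ≤ 2 * m) :
    (invariantPlanes m θ k).Finite ∧
      ((invariantPlanes m θ k).ncard : ℤ) = sigmaInt k (2 * m) ∧
      (invariantPlanes m θ k).ncard = (if Odd k then 0 else m.choose (k / 2)) := by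
  have hncard : (invariantPlanes m θ k).ncard = if Odd k then 0 else m.choose (k / 2) := by
    rw [invariantPlanes_eq_image hinj hθ, Set.ncard_image_of_injective _ coordSubspace_injective]
    split_ifs with hodd
    · have : {S : Finset (Fin m) | 2 * S.card = k} = ∅ := by
        ext S
        simp only [Set.mem_ofPred_eq, Set.mem_empty_iff_false, iff_false]
        rintro rfl
        exact (Nat.not_odd_iff_even.2 (even_two_mul _)) hodd
      rw [this, Set.ncard_empty]
    · have : {S : Finset (Fin m) | 2 * S.card = k} =
          (Finset.powersetCard (k / 2) (Finset.univ : Finset (Fin m)) : Set (Finset (Fin m))) := by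
        ext S
        have := Nat.even_iff.1 (Nat.not_odd_iff_even.1 hodd)
        simp only [Set.mem_ofPred_eq, Finset.mem_coe, Finset.mem_powersetCard, Finset.subset_univ,
          true_and]
        omega
      rw [this, Set.ncard_coe_finset, Finset.card_powersetCard, Finset.card_univ, Fintype.card_fin]
  refine ⟨?_, ?_, hncard⟩
  · rw [invariantPlanes_eq_image hinj hθ]
    exact (Set.toFinite _).image _
  · have hr : ¬ ((k : ℤ) < 0 ∨ 2 * (m : ℤ) < k) := by omega
    have hm2 : (2 * (m : ℤ) / 2).toNat = m := by omega
    have hk2 : ((k : ℤ) / 2).toNat = k / 2 := by omega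
    rw [hncard, sigmaInt, if_neg hr, hm2, hk2]
    by_cases hodd : Odd k <;> simp [hodd]
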